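/- Consider the classical Curie–Weiss model with external field, i.e. ν = δ_h for some h ≠ 0 (so all local fields equal h), and let m be the unique solution of x = tanh(β(x + h)) with sgn(m) = sgn(h). Then m is the unique global minimum of G(x) = (β/2)x² − ln cosh(β(x+h)), m is of type 1 with strength β − β²(1 − m²), and for every β > 0 and every α with 1/2 < α < 1, the sequence of laws of (S_n − n m)/n^α under P_{n,β}^h satisfies a moderate deviations principle with speed n^{2α−1} and rate function I(x) = x²/(2σ²), where σ² = (1 − m²)/(1 − β(1 − m²)). -/

import Mathlib

open MeasureTheory ProbabilityTheory Real Filter Topology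
open scoped ENNReal NNReal

noncomputable section

/-- The value of a spin encoded as a Boolean. -/
def spin (b : Bool) : ℝ := if b then 1 else -1

/-- Total magnetization of a configuration. -/
def mag {n : ℕ} (σ : Fin n → Bool) : ℝ := ∑ i, spin (σ i)

/-- Gibbs weight of a configuration in the random field Curie-Weiss model. -/
def gibbsWeight (β : ℝ) (h : ℕ → ℝ) (n : ℕ) (σ : Fin n → Bool) : ℝ :=
  Real.exp (β / (2 * n) * (mag σ) ^ 2 + β * ∑ i : Fin n, h i * spin (σ i))

/-- The random field Curie-Weiss Gibbs measure on configurations. -/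
def gibbsMeasure (β : ℝ) (h : ℕ → ℝ) (n : ℕ) : Measure (Fin n → Bool) :=
  (ENNReal.ofReal (∑ σ : Fin n → Bool, gibbsWeight β h n σ))⁻¹ •
    ∑ σ : Fin n → Bool, ENNReal.ofReal (gibbsWeight β h n σ) • Measure.dirac σ

/-- `μ` is the infinite product of `ν` over `ℕ` (characterised by finite marginals). -/
def IsProductMeasure (ν : Measure ℝ) (μ : Measure (ℕ → ℝ)) : Prop :=
  ∀ n : ℕ, μ.map (fun h (i : Fin n) => h (i : ℕ)) = Measure.pi fun _ : Fin n => ν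

/-- extended logarithm, `elog 0 = ⊥`, `elog ⊤ = ⊤`. -/
def elog (x : ℝ≥0∞) : EReal :=
  if x = 0 then ⊥ else if x = ⊤ then ⊤ else ((Real.log x.toReal : ℝ) : EReal)

/-- A sequence of measures satisfies a large deviations principle with given speed and
rate function. -/
def HasLDP (P : ℕ → Measure ℝ) (speed : ℕ → ℝ) (I : ℝ → ℝ≥0∞) : Prop :=
  LowerSemicontinuous I ∧ (∀ c : ℝ, IsCompact {x : ℝ | I x ≤ ENNReal.ofReal c}) ∧
    ∀ C : Set ℝ, MeasurableSet C →
      -(⨅ x ∈ interior C, (I x : EReal)) ≤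
          liminf (fun n => ((((speed n)⁻¹ : ℝ) : EReal)) * elog (P n C)) atTop ∧
        limsup (fun n => ((((speed n)⁻¹ : ℝ) : EReal)) * elog (P n C)) atTop ≤
          -(⨅ x ∈ closure C, (I x : EReal))

/-- The function `G` of the random field Curie-Weiss model. -/
def G (β : ℝ) (ν : Measure ℝ) (x : ℝ) : ℝ :=
  β / 2 * x ^ 2 - ∫ h, Real.log (Real.cosh (β * (x + h))) ∂ν

/-- The finite-volume function `G_n^h`. -/
def Gn (β : ℝ) (h : ℕ → ℝ) (n : ℕ) (x : ℝ) : ℝ :=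
  β / 2 * x ^ 2 - (1 / n) * ∑ i : Fin n, Real.log (Real.cosh (β * (x + h i)))

/-- `m` is a (local or global) minimum of `G` of type `k` and strength `l`. -/
def IsMinOfType (β : ℝ) (ν : Measure ℝ) (m : ℝ) (k : ℕ) (l : ℝ) : Prop :=
  1 ≤ k ∧ 0 < l ∧ (∀ i : ℕ, 1 ≤ i → i ≤ 2 * k - 1 → iteratedDeriv i (G β ν) m = 0) ∧
    iteratedDeriv (2 * k) (G β ν) m = l

/-- The height of a minimum `m` of `G`. -/
def height (β : ℝ) (ν : Measure ℝ) (m : ℝ) : ℝ := G β ν m - ⨅ w, G β ν w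

/-- The broadness of a minimum `m` of `G`. -/
def broadness (β : ℝ) (ν : Measure ℝ) (m : ℝ) : ℝ :=
  sInf ((fun y => |y - m|) '' {y | G β ν y < G β ν m})

/-- The moderate deviations rate function. -/
def mdpRate (β l : ℝ) (k : ℕ) (x : ℝ) : ℝ≥0∞ :=
  if k = 1 then ENNReal.ofReal (x ^ 2 / (2 * (l⁻¹ - β⁻¹)))
  else ENNReal.ofReal (l * x ^ (2 * k) / (Nat.factorial (2 * k)))

/-- The polynomial `P_{2k}`. -/
def P2k (l : ℝ) (k : ℕ) (s : ℝ) : ℝ :=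
  l / (2 * (Nat.factorial (2 * k))) * s ^ (2 * k) - ∑ i ∈ Finset.Icc 1 (2 * k - 1), |s| ^ i

/-!
Linearising the square, `S² / n ≥ 2 x S - n x²`, bounds the partition function below by
`exp (-n * (G x - log 2))`, while the `n.choose k` configurations of magnetization density `y` have
total weight `exp (-n * Φ y)` up to factors polynomial in `n`, where `Φ` is the free energy. The
Gibbs variational principle `Φ ≥ G - log 2`, with equality at the solutions of the mean-field
equation, transfers the strict minimum of `G` at `m` to `Φ`. Hence density `y` has probability
`exp (-n * (Φ y - Φ m))`, again up to polynomial factors; these are negligible at speed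
`n ^ (2 * α - 1)`, at which only the second-order expansion of `Φ` at `m` matters, with
`Φ'' m = 1 / (1 - m²) - β = 1 / σ²`.
-/

section HyperbolicTangent

theorem hasDerivAt_tanh (x : ℝ) : HasDerivAt tanh (1 - tanh x ^ 2) x := by
  have h := (Real.hasDerivAt_sinh x).div (Real.hasDerivAt_cosh x) (cosh_pos x).ne'
  have tanh_eq : sinh / cosh = tanh := funext fun y ↦ (Real.tanh_eq_sinh_div_cosh y).symm
  rw [tanh_eq] at h
  refine h.congr_deriv ?_
  have := (cosh_pos x).ne'
  rw [Real.tanh_eq_sinh_div_cosh]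
  field_simp

theorem tanh_strictMono : StrictMono tanh :=
  strictMono_of_deriv_pos fun x ↦ by
    rw [(hasDerivAt_tanh x).deriv]
    exact sub_pos.2 (Real.tanh_sq_lt_one x)

theorem tanh_mem_Ioo (t : ℝ) : tanh t ∈ Set.Ioo (-1) 1 :=
  ⟨neg_one_lt_tanh t, tanh_lt_one t⟩

theorem one_add_tanh_div_two (t : ℝ) : (1 + tanh t) / 2 = exp t / (2 * cosh t) := by
  have := (cosh_pos t).ne'
  rw [← Real.cosh_add_sinh, Real.tanh_eq_sinh_div_cosh]
  field_simp

theorem log_one_add_tanh_div_two (t : ℝ) : log ((1 + tanh t) / 2) = t - log (2 * cosh t) := by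
  rw [one_add_tanh_div_two, log_div (exp_pos t).ne' (by positivity), log_exp]

theorem log_one_sub_one_add_tanh_div_two (t : ℝ) :
    log (1 - (1 + tanh t) / 2) = -t - log (2 * cosh t) := by
  rw [← Real.cosh_neg, ← log_one_add_tanh_div_two, Real.tanh_neg]
  congr 1
  ring

end HyperbolicTangent

section Entropy

theorem negMulLog_add_mul_log_le {p q : ℝ} (hp : 0 ≤ p) (hq : 0 < q) :
    negMulLog p + p * log q ≤ q - p := by
  rcases hp.eq_or_lt with rfl | hp
  · simpa using hq.le
  · have h := mul_le_mul_of_nonneg_left (log_le_sub_one_of_pos (div_pos hq hp)) hp.le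
    rw [log_div hq.ne' hp.ne', mul_sub_one, mul_div_cancel₀ _ hp.ne'] at h
    rw [negMulLog]
    linarith

theorem binEntropy_le_crossEntropy {p q : ℝ} (hp : p ∈ Set.Icc 0 1) (hq : q ∈ Set.Ioo 0 1) :
    binEntropy p ≤ -(p * log q + (1 - p) * log (1 - q)) := by
  have h₁ := negMulLog_add_mul_log_le hp.1 hq.1
  have h₂ := negMulLog_add_mul_log_le (sub_nonneg.2 hp.2) (sub_pos.2 hq.2)
  rw [binEntropy_eq_negMulLog_add_negMulLog_one_sub]
  linarith

theorem one_add_div_two_mem_Icc {y : ℝ} (hy : y ∈ Set.Icc (-1) 1) :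
    (1 + y) / 2 ∈ Set.Icc (0 : ℝ) 1 :=
  ⟨by linarith [hy.1], by linarith [hy.2]⟩

theorem one_add_div_two_mem_Ioo {y : ℝ} (hy : y ∈ Set.Ioo (-1) 1) :
    (1 + y) / 2 ∈ Set.Ioo (0 : ℝ) 1 :=
  ⟨by linarith [hy.1], by linarith [hy.2]⟩

theorem binEntropy_add_mul_le_log_two_mul_cosh {y : ℝ} (hy : y ∈ Set.Icc (-1) 1) (t : ℝ) :
    binEntropy ((1 + y) / 2) + t * y ≤ log (2 * cosh t) := by
  have h := binEntropy_le_crossEntropy (one_add_div_two_mem_Icc hy)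
    (one_add_div_two_mem_Ioo (tanh_mem_Ioo t))
  rw [log_one_add_tanh_div_two, log_one_sub_one_add_tanh_div_two] at h
  linarith

theorem binEntropy_one_add_tanh_div_two (t : ℝ) :
    binEntropy ((1 + tanh t) / 2) = log (2 * cosh t) - t * tanh t := by
  simp only [binEntropy, log_inv, log_one_add_tanh_div_two, log_one_sub_one_add_tanh_div_two]
  ring

end Entropy

section Taylor

theorem isLittleO_sub_sub_sq_of_hasDerivAt {f f' : ℝ → ℝ} {x c : ℝ}
    (hf : ∀ᶠ y in 𝓝 x, HasDerivAt f (f' y) y) (hx : f' x = 0) (hf' : HasDerivAt f' c x) :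
    (fun y ↦ f y - f x - c / 2 * (y - x) ^ 2) =o[𝓝 x] fun y ↦ (y - x) ^ 2 := by
  obtain ⟨r, hr, hball⟩ := Metric.eventually_nhds_iff_ball.1 hf
  have hnhds : 𝓝[Metric.ball x r] x = 𝓝 x :=
    Metric.isOpen_ball.nhdsWithin_eq (Metric.mem_ball_self hr)
  have hderiv : ∀ y ∈ Metric.ball x r, HasDerivWithinAt (fun z ↦ f z - c / 2 * (z - x) ^ 2)
      (f' y - c * (y - x)) (Metric.ball x r) y := fun y hy ↦ by
    have hsq := (((hasDerivAt_id y).sub_const x).pow 2).const_mul (c / 2)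
    refine ((hball y hy).sub hsq).hasDerivWithinAt.congr_deriv ?_
    simp only [id]
    ring
  have hsmall : (fun y ↦ f' y - c * (y - x)) =o[𝓝[Metric.ball x r] x] fun y ↦ (y - x) ^ 1 := by
    simpa [hnhds, hx, mul_comm] using hasDerivAt_iff_isLittleO.1 hf'
  have h := (convex_ball x r).isLittleO_pow_succ_real (Metric.mem_ball_self hr) hderiv hsmall
  simpa [hnhds, sub_right_comm] using h

end Taylor

section MeanFieldEquation

theorem hasDerivAt_mul_add_const (β h x : ℝ) : HasDerivAt (fun x ↦ β * (x + h)) β x := by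
  simpa using ((hasDerivAt_id x).add_const h).const_mul β

theorem hasDerivAt_tanh_mul_add (β h x : ℝ) :
    HasDerivAt (fun x ↦ tanh (β * (x + h))) (β * (1 - tanh (β * (x + h)) ^ 2)) x :=
  ((hasDerivAt_tanh _).comp x (hasDerivAt_mul_add_const β h x)).congr_deriv (mul_comm _ _)

theorem strictConcaveOn_tanh_sub_id {β h : ℝ} (hβ : 0 < β) (hh : 0 ≤ h) :
    StrictConcaveOn ℝ (Set.Ici 0) fun x ↦ tanh (β * (x + h)) - x := by
  have hderiv (x : ℝ) := (hasDerivAt_tanh_mul_add β h x).sub (hasDerivAt_id x)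
  refine StrictAntiOn.strictConcaveOn_of_deriv (convex_Ici 0)
    (fun x _ ↦ (hderiv x).continuousAt.continuousWithinAt) fun x hx y _ hxy ↦ ?_
  rw [interior_Ici, Set.mem_Ioi] at hx
  change deriv ((fun x ↦ tanh (β * (x + h))) - id) y < deriv ((fun x ↦ tanh (β * (x + h))) - id) x
  rw [(hderiv x).deriv, (hderiv y).deriv]
  have htanh_nonneg : 0 ≤ tanh (β * (x + h)) :=
    Real.tanh_zero ▸ tanh_strictMono.monotone (by positivity)
  have htanh_lt : tanh (β * (x + h)) < tanh (β * (y + h)) := tanh_strictMono (by gcongr)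
  gcongr

theorem G_dirac (β h x : ℝ) :
    G β (Measure.dirac h) x = β / 2 * x ^ 2 - log (cosh (β * (x + h))) := by
  rw [G, integral_dirac]

theorem G_dirac_neg_neg (β h x : ℝ) : G β (Measure.dirac (-h)) (-x) = G β (Measure.dirac h) x := by
  rw [G_dirac, G_dirac, neg_sq, ← neg_add, mul_neg, Real.cosh_neg]

theorem hasDerivAt_G_dirac (β h x : ℝ) :
    HasDerivAt (G β (Measure.dirac h)) (-(β * (tanh (β * (x + h)) - x))) x := by
  have hlog := ((hasDerivAt_mul_add_const β h x).cosh).log (cosh_pos _).ne'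
  have hG := ((hasDerivAt_pow 2 x).const_mul (β / 2)).sub hlog
  rw [funext (G_dirac β h)]
  refine hG.congr_deriv ?_
  rw [Real.tanh_eq_sinh_div_cosh]
  push_cast
  ring

theorem continuous_G_dirac (β h : ℝ) : Continuous (G β (Measure.dirac h)) :=
  continuous_iff_continuousAt.2 fun x ↦ (hasDerivAt_G_dirac β h x).continuousAt

theorem deriv_deriv_G_dirac (β h x : ℝ) :
    deriv (deriv (G β (Measure.dirac h))) x = β - β ^ 2 * (1 - tanh (β * (x + h)) ^ 2) := by
  rw [funext fun y ↦ (hasDerivAt_G_dirac β h y).deriv]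
  have h' := (((hasDerivAt_tanh_mul_add β h x).sub (hasDerivAt_id x)).const_mul β).neg
  refine (h'.congr_deriv ?_).deriv
  ring

theorem G_dirac_neg_lt {β h x : ℝ} (hβ : 0 < β) (hh : 0 < h) (hx : x < 0) :
    G β (Measure.dirac h) (-x) < G β (Measure.dirac h) x := by
  have habs : |x + h| < |-x + h| := by
    rw [abs_of_pos (by linarith : 0 < -x + h)]
    exact abs_lt.2 ⟨by linarith, by linarith⟩
  have hcosh : cosh (β * (x + h)) < cosh (β * (-x + h)) := by
    rw [Real.cosh_lt_cosh, abs_mul, abs_mul]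
    gcongr
  rw [G_dirac, G_dirac, neg_sq]
  gcongr

section PositiveField

variable {β h m : ℝ}

theorem tanh_sub_id_zero_pos (hβ : 0 < β) (hh : 0 < h) : 0 < tanh (β * (0 + h)) - 0 := by
  rw [sub_zero, zero_add, ← Real.tanh_zero]
  exact tanh_strictMono (mul_pos hβ hh)

theorem strictAntiOn_G_dirac (hβ : 0 < β) (hh : 0 < h) (hm₀ : 0 < m)
    (hm : m = tanh (β * (m + h))) : StrictAntiOn (G β (Measure.dirac h)) (Set.Icc 0 m) := by
  refine strictAntiOn_of_deriv_neg (convex_Icc 0 m) (continuous_G_dirac β h).continuousOn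
    fun x hx ↦ ?_
  rw [interior_Icc, ← openSegment_eq_Ioo hm₀] at hx
  have hmin := (strictConcaveOn_tanh_sub_id hβ hh.le).lt_on_openSegment
    Set.self_mem_Ici hm₀.le hm₀.ne hx
  rw [← hm, sub_self, min_eq_right (tanh_sub_id_zero_pos hβ hh).le] at hmin
  rw [(hasDerivAt_G_dirac β h x).deriv]
  exact neg_neg_of_pos (mul_pos hβ hmin)

theorem strictMonoOn_G_dirac (hβ : 0 < β) (hh : 0 < h) (hm₀ : 0 < m)
    (hm : m = tanh (β * (m + h))) : StrictMonoOn (G β (Measure.dirac h)) (Set.Ici m) := by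
  refine strictMonoOn_of_deriv_pos (convex_Ici m) (continuous_G_dirac β h).continuousOn
    fun x hx ↦ ?_
  rw [interior_Ici, Set.mem_Ioi] at hx
  have hx₀ := hm₀.trans hx
  have hmem : m ∈ openSegment ℝ 0 x := by
    rw [openSegment_eq_Ioo hx₀]
    exact ⟨hm₀, hx⟩
  have hmin := (strictConcaveOn_tanh_sub_id hβ hh.le).lt_on_openSegment
    Set.self_mem_Ici hx₀.le hx₀.ne hmem
  rw [← hm, sub_self, min_lt_iff, or_iff_right (tanh_sub_id_zero_pos hβ hh).not_gt] at hmin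
  rw [(hasDerivAt_G_dirac β h x).deriv]
  exact neg_pos.2 (mul_neg_of_pos_of_neg hβ hmin)

theorem G_dirac_lt_of_pos (hβ : 0 < β) (hh : 0 < h) (hm₀ : 0 < m)
    (hm : m = tanh (β * (m + h))) {x : ℝ} (hx : x ≠ m) :
    G β (Measure.dirac h) m < G β (Measure.dirac h) x := by
  have hnonneg : ∀ y, 0 ≤ y → y ≠ m → G β (Measure.dirac h) m < G β (Measure.dirac h) y := by
    intro y hy hym
    rcases hym.lt_or_gt with hlt | hgt
    · exact strictAntiOn_G_dirac hβ hh hm₀ hm ⟨hy, hlt.le⟩ ⟨hm₀.le, le_rfl⟩ hlt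
    · exact strictMonoOn_G_dirac hβ hh hm₀ hm Set.self_mem_Ici hgt.le hgt
  rcases le_or_gt 0 x with hx₀ | hx₀
  · exact hnonneg x hx₀ hx
  · refine lt_of_le_of_lt ?_ (G_dirac_neg_lt hβ hh hx₀)
    rcases eq_or_ne (-x) m with rfl | hne
    · exact le_rfl
    · exact (hnonneg (-x) (neg_nonneg.2 hx₀.le) hne).le

theorem mul_one_sub_sq_lt_one_of_pos (hβ : 0 < β) (hh : 0 < h) (hm₀ : 0 < m)
    (hm : m = tanh (β * (m + h))) : β * (1 - m ^ 2) < 1 := by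
  have hslope := (strictConcaveOn_tanh_sub_id hβ hh.le).lt_slope_of_hasDerivAt
    Set.self_mem_Ici hm₀.le hm₀ ((hasDerivAt_tanh_mul_add β h m).sub (hasDerivAt_id m))
  rw [slope_def_field, ← hm, sub_self, zero_sub] at hslope
  have := div_neg_of_neg_of_pos (neg_neg_of_pos (tanh_sub_id_zero_pos hβ hh)) (sub_pos.2 hm₀)
  linarith

end PositiveField

theorem pos_of_sign_eq_sign {m h : ℝ} (hh : 0 < h) (hsign : Real.sign m = Real.sign h) :
    0 < m := by
  rw [Real.sign_of_pos hh] at hsign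
  have hm : m ≠ 0 := by
    rintro rfl
    simp at hsign
  simpa [hsign] using Real.sign_mul_pos_of_ne_zero m hm

theorem neg_eq_tanh {β h m : ℝ} (hm : m = tanh (β * (m + h))) :
    -m = tanh (β * (-m + -h)) := by
  rw [← neg_add, mul_neg, Real.tanh_neg, ← hm]

section NonzeroField

variable {β h m : ℝ}

theorem G_dirac_lt (hβ : 0 < β) (hh : h ≠ 0) (hm : m = tanh (β * (m + h)))
    (hsign : Real.sign m = Real.sign h) {x : ℝ} (hx : x ≠ m) :
    G β (Measure.dirac h) m < G β (Measure.dirac h) x := by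
  rcases hh.lt_or_gt with hneg | hpos
  · have hm₀ : 0 < -m := pos_of_sign_eq_sign (neg_pos.2 hneg) (by simp [Real.sign_neg, hsign])
    rw [← G_dirac_neg_neg β h m, ← G_dirac_neg_neg β h x]
    exact G_dirac_lt_of_pos hβ (neg_pos.2 hneg) hm₀ (neg_eq_tanh hm) (neg_injective.ne hx)
  · exact G_dirac_lt_of_pos hβ hpos (pos_of_sign_eq_sign hpos hsign) hm hx

theorem mul_one_sub_sq_lt_one (hβ : 0 < β) (hh : h ≠ 0) (hm : m = tanh (β * (m + h)))
    (hsign : Real.sign m = Real.sign h) : β * (1 - m ^ 2) < 1 := by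
  rcases hh.lt_or_gt with hneg | hpos
  · have hm₀ : 0 < -m := pos_of_sign_eq_sign (neg_pos.2 hneg) (by simp [Real.sign_neg, hsign])
    rw [← neg_sq]
    exact mul_one_sub_sq_lt_one_of_pos hβ (neg_pos.2 hneg) hm₀ (neg_eq_tanh hm)
  · exact mul_one_sub_sq_lt_one_of_pos hβ hpos (pos_of_sign_eq_sign hpos hsign) hm

end NonzeroField

theorem isMinOfType_one_G_dirac {β h m : ℝ} (hβ : 0 < β) (hm : m = tanh (β * (m + h)))
    (hstable : β * (1 - m ^ 2) < 1) :
    IsMinOfType β (Measure.dirac h) m 1 (β - β ^ 2 * (1 - m ^ 2)) := by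
  refine ⟨le_rfl, by nlinarith, fun i hi hi' ↦ ?_, ?_⟩
  · obtain rfl : i = 1 := le_antisymm hi' hi
    rw [iteratedDeriv_one, (hasDerivAt_G_dirac β h m).deriv, ← hm, sub_self, mul_zero, neg_zero]
  · rw [iteratedDeriv_succ, iteratedDeriv_one, deriv_deriv_G_dirac, ← hm]

end MeanFieldEquation

section FreeEnergy

/-- The free energy per spin (in units of `1 / β`) of the Curie–Weiss model with constant field `h`
at magnetization density `y`: `β` times the energy, minus the entropy of a spin of mean `y`. -/
def freeEnergy (β h y : ℝ) : ℝ :=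
  -(β / 2 * y ^ 2 + β * h * y) - binEntropy ((1 + y) / 2)

variable {β h m : ℝ}

theorem continuous_freeEnergy (β h : ℝ) : Continuous (freeEnergy β h) := by
  unfold freeEnergy
  fun_prop

theorem G_dirac_sub_log_two_le_freeEnergy (β h : ℝ) {y : ℝ} (hy : y ∈ Set.Icc (-1) 1) :
    G β (Measure.dirac h) y - log 2 ≤ freeEnergy β h y := by
  have hentropy := binEntropy_add_mul_le_log_two_mul_cosh hy (β * (y + h))
  rw [log_mul two_ne_zero (cosh_pos _).ne'] at hentropy
  rw [G_dirac, freeEnergy]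
  linarith

theorem freeEnergy_eq_G_dirac_sub_log_two (hm : m = tanh (β * (m + h))) :
    freeEnergy β h m = G β (Measure.dirac h) m - log 2 := by
  have hentropy := binEntropy_one_add_tanh_div_two (β * (m + h))
  rw [log_mul two_ne_zero (cosh_pos _).ne', ← hm] at hentropy
  rw [G_dirac, freeEnergy]
  linarith

theorem freeEnergy_lt (hm : m = tanh (β * (m + h)))
    (hmin : ∀ x ≠ m, G β (Measure.dirac h) m < G β (Measure.dirac h) x) :
    ∀ y ∈ Set.Icc (-1) 1, y ≠ m → freeEnergy β h m < freeEnergy β h y := fun y hy hym ↦ by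
  rw [freeEnergy_eq_G_dirac_sub_log_two hm]
  exact (sub_lt_sub_right (hmin y hym) _).trans_le (G_dirac_sub_log_two_le_freeEnergy β h hy)

theorem hasDerivAt_freeEnergy (β h : ℝ) {y : ℝ} (hy : y ∈ Set.Ioo (-1) 1) :
    HasDerivAt (freeEnergy β h)
      (-(β * (y + h)) - (log (1 - (1 + y) / 2) - log ((1 + y) / 2)) / 2) y := by
  have hp := one_add_div_two_mem_Ioo hy
  have henergy := ((hasDerivAt_pow 2 y).const_mul (β / 2)).add
    ((hasDerivAt_id y).const_mul (β * h))
  have hentropy := (hasDerivAt_binEntropy hp.1.ne' hp.2.ne).comp y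
    (((hasDerivAt_id y).const_add 1).div_const 2)
  refine (henergy.neg.sub hentropy).congr_deriv ?_
  push_cast
  ring

theorem hasDerivAt_deriv_freeEnergy (β h : ℝ) {y : ℝ} (hy : y ∈ Set.Ioo (-1) 1) :
    HasDerivAt (fun y ↦ -(β * (y + h)) - (log (1 - (1 + y) / 2) - log ((1 + y) / 2)) / 2)
      (1 / (1 - y ^ 2) - β) y := by
  have hp := one_add_div_two_mem_Ioo hy
  have hq : 0 < 1 - (1 + y) / 2 := sub_pos.2 hp.2
  have hhalf := ((hasDerivAt_id y).const_add 1).div_const 2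
  have hlog := ((hhalf.const_sub 1).log hq.ne').sub (hhalf.log hp.1.ne')
  refine ((hasDerivAt_mul_add_const β h y).neg.sub (hlog.div_const 2)).congr_deriv ?_
  have h₁ : 1 + y ≠ 0 := by linarith [hy.1]
  have h₂ : 1 - y ≠ 0 := by linarith [hy.2]
  have h₃ : 1 - y ^ 2 = (1 + y) * (1 - y) := by ring
  have h₄ : 1 - (1 + y) / 2 = (1 - y) / 2 := by ring
  simp only [id, h₃, h₄]
  field_simp
  ring

theorem isLittleO_freeEnergy_sub (hm : m = tanh (β * (m + h))) :
    (fun y ↦ freeEnergy β h y - freeEnergy β h m - (1 / (1 - m ^ 2) - β) / 2 * (y - m) ^ 2)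
      =o[𝓝 m] fun y ↦ (y - m) ^ 2 := by
  have hmem : m ∈ Set.Ioo (-1) 1 := hm ▸ tanh_mem_Ioo _
  refine isLittleO_sub_sub_sq_of_hasDerivAt ?_ ?_ (hasDerivAt_deriv_freeEnergy β h hmem)
  · filter_upwards [isOpen_Ioo.mem_nhds hmem] with y hy using hasDerivAt_freeEnergy β h hy
  · have hp := log_one_add_tanh_div_two (β * (m + h))
    have hq := log_one_sub_one_add_tanh_div_two (β * (m + h))
    rw [← hm] at hp hq
    rw [hp, hq]
    ring

end FreeEnergy

section BinomialCoefficients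

theorem factorial_mul_pow_le (k j : ℕ) : k.factorial * k ^ j ≤ j.factorial * k ^ k := by
  rcases le_total k j with hkj | hjk
  · calc k.factorial * k ^ j
        = k.factorial * k ^ (j - k) * k ^ k := by
          rw [mul_assoc, ← pow_add, Nat.sub_add_cancel hkj]
      _ ≤ j.factorial * k ^ k := by
          gcongr
          exact Nat.factorial_mul_pow_sub_le_factorial hkj
  · calc k.factorial * k ^ j
        = j.factorial * k.descFactorial (k - j) * k ^ j := by
          rw [← Nat.factorial_mul_descFactorial (Nat.sub_le k j), Nat.sub_sub_self hjk]
      _ ≤ j.factorial * k ^ (k - j) * k ^ j := by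
          gcongr
          exact Nat.descFactorial_le_pow _ _
      _ = j.factorial * k ^ k := by
          rw [mul_assoc, ← pow_add, Nat.sub_add_cancel hjk]

/-- The mode of the binomial distribution with parameters `n` and `k / n` is `k`. -/
theorem choose_mul_pow_mul_pow_le {n k j : ℕ} (hk : k ≤ n) (hj : j ≤ n) :
    n.choose j * (k ^ j * (n - k) ^ (n - j)) ≤ n.choose k * (k ^ k * (n - k) ^ (n - k)) := by
  have hpos : 0 < j.factorial * (n - j).factorial * (k.factorial * (n - k).factorial) := by
    positivity
  refine Nat.le_of_mul_le_mul_left ?_ hpos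
  calc j.factorial * (n - j).factorial * (k.factorial * (n - k).factorial) *
        (n.choose j * (k ^ j * (n - k) ^ (n - j)))
      = n.choose j * j.factorial * (n - j).factorial *
        ((k.factorial * k ^ j) * ((n - k).factorial * (n - k) ^ (n - j))) := by ring
    _ ≤ n.choose j * j.factorial * (n - j).factorial *
        ((j.factorial * k ^ k) * ((n - j).factorial * (n - k) ^ (n - k))) :=
        Nat.mul_le_mul_left _ (Nat.mul_le_mul (factorial_mul_pow_le _ _) (factorial_mul_pow_le _ _))
    _ = n.choose k * k.factorial * (n - k).factorial *
        ((j.factorial * k ^ k) * ((n - j).factorial * (n - k) ^ (n - k))) := by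
        rw [Nat.choose_mul_factorial_mul_factorial hj, Nat.choose_mul_factorial_mul_factorial hk]
    _ = j.factorial * (n - j).factorial * (k.factorial * (n - k).factorial) *
        (n.choose k * (k ^ k * (n - k) ^ (n - k))) := by ring

theorem sum_choose_mul_pow_mul_pow {n k : ℕ} (hk : k ≤ n) :
    ∑ j ∈ Finset.range (n + 1), n.choose j * (k ^ j * (n - k) ^ (n - j)) = n ^ n := by
  conv_rhs => rw [← Nat.add_sub_cancel' hk, add_pow, Nat.add_sub_cancel' hk]
  exact Finset.sum_congr rfl fun j _ ↦ by rw [Nat.cast_id, mul_comm]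

theorem choose_mul_pow_mul_pow_le_pow {n k : ℕ} (hk : k ≤ n) :
    n.choose k * (k ^ k * (n - k) ^ (n - k)) ≤ n ^ n := by
  rw [← sum_choose_mul_pow_mul_pow hk]
  exact Finset.single_le_sum (f := fun j ↦ n.choose j * (k ^ j * (n - k) ^ (n - j)))
    (fun _ _ ↦ Nat.zero_le _) (Finset.mem_range_succ_iff.2 hk)

theorem pow_le_mul_choose_mul_pow_mul_pow {n k : ℕ} (hk : k ≤ n) :
    n ^ n ≤ (n + 1) * (n.choose k * (k ^ k * (n - k) ^ (n - k))) := by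
  rw [← sum_choose_mul_pow_mul_pow hk]
  simpa using Finset.sum_le_card_nsmul _ _ _ fun j hj ↦
    choose_mul_pow_mul_pow_le hk (Finset.mem_range_succ_iff.1 hj)

theorem exp_mul_negMulLog_div {n : ℕ} (hn : n ≠ 0) (k : ℕ) :
    exp (n * negMulLog (k / n)) = ((k / n : ℝ) ^ k)⁻¹ := by
  rcases k.eq_zero_or_pos with rfl | hk
  · simp
  · have hn' : (n : ℝ) ≠ 0 := Nat.cast_ne_zero.2 hn
    have hpos : (0 : ℝ) < k / n := by positivity
    have hexponent : n * negMulLog (k / n : ℝ) = -(k * log (k / n)) := by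
      rw [negMulLog]
      field_simp
    rw [hexponent, exp_neg, mul_comm, exp_mul, exp_log hpos, rpow_natCast]

theorem exp_mul_binEntropy_div {n k : ℕ} (hn : n ≠ 0) (hk : k ≤ n) :
    exp (n * binEntropy (k / n)) = n ^ n / (k ^ k * (n - k : ℕ) ^ (n - k)) := by
  have hsub : (1 - k / n : ℝ) = (n - k : ℕ) / n := by
    rw [Nat.cast_sub hk, sub_div, div_self (Nat.cast_ne_zero.2 hn)]
  rw [binEntropy_eq_negMulLog_add_negMulLog_one_sub, hsub, mul_add, exp_add,
    exp_mul_negMulLog_div hn, exp_mul_negMulLog_div hn, ← mul_inv, div_pow, div_pow,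
    div_mul_div_comm, ← pow_add, Nat.add_sub_cancel' hk, inv_div]

theorem pow_self_mul_pow_self_pos (k l : ℕ) : (0 : ℝ) < k ^ k * l ^ l := by
  exact_mod_cast Nat.mul_pos Nat.pow_self_pos Nat.pow_self_pos

theorem choose_le_exp_mul_binEntropy {n k : ℕ} (hn : n ≠ 0) (hk : k ≤ n) :
    (n.choose k : ℝ) ≤ exp (n * binEntropy (k / n)) := by
  rw [exp_mul_binEntropy_div hn hk, le_div_iff₀ (pow_self_mul_pow_self_pos _ _)]
  exact_mod_cast choose_mul_pow_mul_pow_le_pow hk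

theorem exp_mul_binEntropy_le_mul_choose {n k : ℕ} (hn : n ≠ 0) (hk : k ≤ n) :
    exp (n * binEntropy (k / n)) ≤ (n + 1) * n.choose k := by
  rw [exp_mul_binEntropy_div hn hk, div_le_iff₀ (pow_self_mul_pow_self_pos _ _), mul_assoc]
  exact_mod_cast pow_le_mul_choose_mul_pow_mul_pow hk

end BinomialCoefficients

section LargeDeviations

theorem elog_eq_log (p : ℝ≥0∞) : elog p = ENNReal.log p := rfl

theorem inv_mul_elog_le_iff {a b : ℝ} (ha : 0 < a) {p : ℝ≥0∞} :
    (a⁻¹ : ℝ) * elog p ≤ (b : EReal) ↔ p ≤ ENNReal.ofReal (exp (b * a)) := by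
  rw [EReal.coe_inv, ← EReal.div_eq_inv_mul,
    EReal.div_le_iff_le_mul (EReal.coe_pos.2 ha) (EReal.coe_ne_top a), ← EReal.coe_mul, mul_comm a,
    ← log_exp (b * a), ← ENNReal.log_ofReal_of_pos (exp_pos _), elog_eq_log, log_exp,
    ENNReal.log_le_log_iff]

theorem le_inv_mul_elog_iff {a b : ℝ} (ha : 0 < a) {p : ℝ≥0∞} :
    (b : EReal) ≤ (a⁻¹ : ℝ) * elog p ↔ ENNReal.ofReal (exp (b * a)) ≤ p := by
  rw [EReal.coe_inv, ← EReal.div_eq_inv_mul,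
    EReal.le_div_iff_mul_le (EReal.coe_pos.2 ha) (EReal.coe_ne_top a), ← EReal.coe_mul,
    ← log_exp (b * a), ← ENNReal.log_ofReal_of_pos (exp_pos _), elog_eq_log, log_exp,
    ENNReal.log_le_log_iff]

theorem coe_ofReal_of_nonneg {x : ℝ} (hx : 0 ≤ x) : ((ENNReal.ofReal x : ℝ≥0∞) : EReal) = x := by
  rw [EReal.coe_ennreal_ofReal, max_eq_left hx]

theorem isCompact_setOf_ofReal_le {I : ℝ → ℝ} (hI : Continuous I)
    (hcompact : ∀ c, IsCompact {x | I x ≤ c}) (c : ℝ) :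
    IsCompact {x | ENNReal.ofReal (I x) ≤ ENNReal.ofReal c} :=
  (hcompact (max c 0)).of_isClosed_subset
    (isClosed_le (ENNReal.continuous_ofReal.comp hI) continuous_const) fun _ hx ↦
      (ENNReal.ofReal_le_ofReal_iff'.1 hx).elim le_max_of_le_left le_max_of_le_right

variable {P : ℕ → Measure ℝ} {speed : ℕ → ℝ} {I : ℝ → ℝ} {C : Set ℝ}

theorem neg_iInf_le_liminf (hspeed : ∀ᶠ n in atTop, 0 < speed n) (hI : ∀ x, 0 ≤ I x) {U : Set ℝ}
    (hlower : ∀ x ∈ U, ∀ A > I x, ∀ᶠ n in atTop, ENNReal.ofReal (exp (-A * speed n)) ≤ P n C) :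
    -(⨅ x ∈ U, (ENNReal.ofReal (I x) : EReal)) ≤
      liminf (fun n ↦ ((speed n)⁻¹ : ℝ) * elog (P n C)) atTop := by
  rw [EReal.neg_le]
  refine le_iInf₂ fun x hx ↦ ?_
  rw [coe_ofReal_of_nonneg (hI x), EReal.neg_le]
  refine EReal.ge_of_forall_gt_iff_ge.1 fun b hb ↦ le_liminf_of_le (by isBoundedDefault) ?_
  have hA : I x < -b := lt_neg_of_lt_neg (by exact_mod_cast hb)
  filter_upwards [hspeed, hlower x hx (-b) hA] with n hn hPn
  rwa [le_inv_mul_elog_iff hn, ← neg_neg b]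

theorem limsup_le_neg_iInf (hspeed : ∀ᶠ n in atTop, 0 < speed n) (hI : ∀ x, 0 ≤ I x)
    (hupper : ∀ b' b, b' < b → (∀ x ∈ C, b ≤ I x) →
      ∀ᶠ n in atTop, P n C ≤ ENNReal.ofReal (exp (-b' * speed n))) :
    limsup (fun n ↦ ((speed n)⁻¹ : ℝ) * elog (P n C)) atTop ≤
      -(⨅ x ∈ closure C, (ENNReal.ofReal (I x) : EReal)) := by
  refine EReal.le_of_forall_lt_iff_le.1 fun c hc ↦ limsup_le_of_le (by isBoundedDefault) ?_
  obtain ⟨b, hb, hbc⟩ := EReal.lt_iff_exists_real_btwn.1 hc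
  have hC : ∀ x ∈ C, -b ≤ I x := fun x hx ↦ by
    have h : -(I x : EReal) < b := by
      refine lt_of_le_of_lt ?_ hb
      rw [← coe_ofReal_of_nonneg (hI x)]
      exact EReal.neg_le_neg_iff.2 (iInf₂_le x (subset_closure hx))
    exact (neg_lt.1 (by exact_mod_cast h)).le
  filter_upwards [hspeed, hupper (-c) (-b) (neg_lt_neg (EReal.coe_lt_coe_iff.1 hbc)) hC]
    with n hn hPn
  rwa [inv_mul_elog_le_iff hn, ← neg_neg c]

theorem hasLDP_ofReal (hspeed : ∀ᶠ n in atTop, 0 < speed n) (hI : ∀ x, 0 ≤ I x)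
    (hcont : Continuous I) (hcompact : ∀ c, IsCompact {x | I x ≤ c})
    (hlower : ∀ C, MeasurableSet C → ∀ x ∈ interior C, ∀ A > I x,
      ∀ᶠ n in atTop, ENNReal.ofReal (exp (-A * speed n)) ≤ P n C)
    (hupper : ∀ C, MeasurableSet C → ∀ b' b, b' < b → (∀ x ∈ C, b ≤ I x) →
      ∀ᶠ n in atTop, P n C ≤ ENNReal.ofReal (exp (-b' * speed n))) :
    HasLDP P speed fun x ↦ ENNReal.ofReal (I x) :=
  ⟨(ENNReal.continuous_ofReal.comp hcont).lowerSemicontinuous,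
    isCompact_setOf_ofReal_le hcont hcompact, fun C hC ↦
      ⟨neg_iInf_le_liminf hspeed hI (hlower C hC), limsup_le_neg_iInf hspeed hI (hupper C hC)⟩⟩

end LargeDeviations

section Configurations

/-- The number of spins `+1` in a configuration. -/
def upCount {n : ℕ} (σ : Fin n → Bool) : ℕ := (Finset.univ.filter fun i ↦ σ i).card

/-- The magnetization per spin of a configuration of `n` spins, `k` of which are `+1`. -/
def magDensity (n k : ℕ) : ℝ := 2 * (k / n) - 1

theorem upCount_le {n : ℕ} (σ : Fin n → Bool) : upCount σ ≤ n :=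
  (Finset.card_filter_le _ _).trans_eq (Finset.card_fin n)

theorem mag_eq_two_mul_upCount_sub {n : ℕ} (σ : Fin n → Bool) : mag σ = 2 * upCount σ - n := by
  have hspin (b : Bool) : spin b = 2 * (if b then 1 else 0) - 1 := by
    cases b <;> norm_num [spin]
  simp only [mag, hspin, Finset.sum_sub_distrib, ← Finset.mul_sum, Finset.sum_boole,
    Finset.sum_const, Finset.card_fin, nsmul_eq_mul, mul_one, upCount]

theorem mul_magDensity {n : ℕ} (hn : n ≠ 0) (k : ℕ) : n * magDensity n k = 2 * k - n := by
  have : (n : ℝ) ≠ 0 := Nat.cast_ne_zero.2 hn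
  rw [magDensity]
  field_simp

theorem mag_eq_mul_magDensity {n : ℕ} (hn : n ≠ 0) (σ : Fin n → Bool) :
    mag σ = n * magDensity n (upCount σ) := by
  rw [mag_eq_two_mul_upCount_sub, mul_magDensity hn]

theorem one_add_magDensity_div_two (n k : ℕ) : (1 + magDensity n k) / 2 = k / n := by
  rw [magDensity]
  ring

theorem magDensity_mem_Icc {n k : ℕ} (hk : k ≤ n) : magDensity n k ∈ Set.Icc (-1) 1 := by
  have h₀ : 0 ≤ (k / n : ℝ) := by positivity
  have h₁ : (k / n : ℝ) ≤ 1 := div_le_one_of_le₀ (Nat.cast_le.2 hk) n.cast_nonneg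
  constructor <;> rw [magDensity] <;> linarith

theorem card_filter_upCount_eq (n k : ℕ) :
    (Finset.univ.filter fun σ : Fin n → Bool ↦ upCount σ = k).card = n.choose k := by
  have hchoose : n.choose k = (Finset.powersetCard k (Finset.univ : Finset (Fin n))).card := by
    rw [Finset.card_powersetCard, Finset.card_fin]
  rw [hchoose]
  refine Finset.card_bij' (fun σ _ ↦ Finset.univ.filter fun i ↦ σ i)
    (fun s _ i ↦ decide (i ∈ s)) ?_ ?_ ?_ ?_
  · intro σ hσ
    exact Finset.mem_powersetCard.2 ⟨Finset.subset_univ _, (Finset.mem_filter.1 hσ).2⟩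
  · intro s hs
    refine Finset.mem_filter.2 ⟨Finset.mem_univ _, ?_⟩
    simpa [upCount] using (Finset.mem_powersetCard.1 hs).2
  · intro σ _
    simp
  · intro s _
    simp

end Configurations

section GibbsMeasure

/-- The normalizing constant of the Gibbs measure. -/
def partitionFunction (β : ℝ) (h : ℕ → ℝ) (n : ℕ) : ℝ := ∑ σ : Fin n → Bool, gibbsWeight β h n σ

variable {β : ℝ}

theorem gibbsWeight_pos (β : ℝ) (h : ℕ → ℝ) {n : ℕ} (σ : Fin n → Bool) :
    0 < gibbsWeight β h n σ :=
  exp_pos _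

theorem partitionFunction_pos (β : ℝ) (h : ℕ → ℝ) (n : ℕ) : 0 < partitionFunction β h n :=
  Finset.sum_pos (fun σ _ ↦ gibbsWeight_pos β h σ) Finset.univ_nonempty

theorem gibbsMeasure_coe_finset (β : ℝ) (h : ℕ → ℝ) (n : ℕ) (S : Finset (Fin n → Bool)) :
    gibbsMeasure β h n S =
      ENNReal.ofReal ((∑ σ ∈ S, gibbsWeight β h n σ) / partitionFunction β h n) := by
  have hZ := partitionFunction_pos β h n
  rw [div_eq_inv_mul, ENNReal.ofReal_mul (inv_pos.2 hZ).le, ENNReal.ofReal_inv_of_pos hZ,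
    ENNReal.ofReal_sum_of_nonneg fun σ _ ↦ (gibbsWeight_pos β h σ).le, gibbsMeasure,
    Measure.smul_apply, Measure.finsetSum_apply, smul_eq_mul, partitionFunction]
  congr 1
  simp [Set.indicator_apply]

instance isProbabilityMeasure_gibbsMeasure (β : ℝ) (h : ℕ → ℝ) (n : ℕ) :
    IsProbabilityMeasure (gibbsMeasure β h n) where
  measure_univ := by
    rw [← Finset.coe_univ, gibbsMeasure_coe_finset, ← partitionFunction,
      div_self (partitionFunction_pos β h n).ne', ENNReal.ofReal_one]

theorem sum_exp_sum_mul_spin {n : ℕ} (t : Fin n → ℝ) :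
    ∑ σ : Fin n → Bool, exp (∑ i, t i * spin (σ i)) = ∏ i, (2 * cosh (t i)) := by
  have hcosh (i : Fin n) : ∑ b, exp (t i * spin b) = 2 * cosh (t i) := by
    rw [Fintype.sum_bool, Real.cosh_eq]
    simp only [spin, if_true, Bool.false_eq_true, if_false, mul_one, mul_neg]
    ring
  simp_rw [← hcosh, exp_sum, Finset.prod_univ_sum, Fintype.piFinset_univ]

theorem exp_sum_mul_spin_le_gibbsWeight (hβ : 0 ≤ β) (h : ℕ → ℝ) {n : ℕ} (hn : n ≠ 0) (x : ℝ)
    (σ : Fin n → Bool) :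
    exp (-(n * (β / 2 * x ^ 2))) * exp (∑ i : Fin n, β * (x + h i) * spin (σ i)) ≤
      gibbsWeight β h n σ := by
  have hn' : (0 : ℝ) < n := by positivity
  have hsquare : 2 * x * mag σ - n * x ^ 2 ≤ mag σ ^ 2 / n := by
    rw [le_div_iff₀ hn']
    linarith [sq_nonneg (mag σ - n * x)]
  have hfield : ∑ i : Fin n, β * (x + h i) * spin (σ i) =
      β * x * mag σ + β * ∑ i : Fin n, h i * spin (σ i) := by
    simp only [mag, Finset.mul_sum, ← Finset.sum_add_distrib]
    exact Finset.sum_congr rfl fun i _ ↦ by ring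
  rw [← exp_add, hfield, gibbsWeight, exp_le_exp]
  calc -(n * (β / 2 * x ^ 2)) + (β * x * mag σ + β * ∑ i : Fin n, h i * spin (σ i))
      = β / 2 * (2 * x * mag σ - n * x ^ 2) + β * ∑ i : Fin n, h i * spin (σ i) := by ring
    _ ≤ β / 2 * (mag σ ^ 2 / n) + β * ∑ i : Fin n, h i * spin (σ i) := by gcongr
    _ = β / (2 * n) * mag σ ^ 2 + β * ∑ i : Fin n, h i * spin (σ i) := by ring

theorem exp_neg_mul_Gn_le_partitionFunction (hβ : 0 ≤ β) (h : ℕ → ℝ) {n : ℕ} (hn : n ≠ 0)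
    (x : ℝ) : exp (-(n * (Gn β h n x - log 2))) ≤ partitionFunction β h n := by
  have hn' : (n : ℝ) ≠ 0 := Nat.cast_ne_zero.2 hn
  have hlog : ∑ i : Fin n, log (2 * cosh (β * (x + h i))) =
      n * log 2 + ∑ i : Fin n, log (cosh (β * (x + h i))) := by
    simp [log_mul two_ne_zero (cosh_pos _).ne', Finset.sum_add_distrib]
  have hexponent : -(n * (Gn β h n x - log 2)) =
      -(n * (β / 2 * x ^ 2)) + ∑ i : Fin n, log (2 * cosh (β * (x + h i))) := by
    rw [hlog, Gn]
    field_simp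
    ring
  calc exp (-(n * (Gn β h n x - log 2)))
      = exp (-(n * (β / 2 * x ^ 2))) *
          ∑ σ : Fin n → Bool, exp (∑ i : Fin n, β * (x + h i) * spin (σ i)) := by
        rw [hexponent, exp_add, sum_exp_sum_mul_spin, exp_sum]
        simp_rw [exp_log (mul_pos two_pos (cosh_pos _))]
    _ ≤ partitionFunction β h n := by
        rw [Finset.mul_sum]
        exact Finset.sum_le_sum fun σ _ ↦ exp_sum_mul_spin_le_gibbsWeight hβ h hn x σ

section ConstantField

variable {h m : ℝ}

theorem Gn_const (β h : ℝ) {n : ℕ} (hn : n ≠ 0) (x : ℝ) :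
    Gn β (fun _ ↦ h) n x = G β (Measure.dirac h) x := by
  have : (n : ℝ) ≠ 0 := Nat.cast_ne_zero.2 hn
  rw [Gn, G_dirac, Finset.sum_const, Finset.card_fin, nsmul_eq_mul]
  field_simp

theorem gibbsWeight_const (β h : ℝ) {n : ℕ} (hn : n ≠ 0) (σ : Fin n → Bool) :
    gibbsWeight β (fun _ ↦ h) n σ =
      exp (n * (β / 2 * magDensity n (upCount σ) ^ 2 + β * h * magDensity n (upCount σ))) := by
  have : (n : ℝ) ≠ 0 := Nat.cast_ne_zero.2 hn
  rw [gibbsWeight, ← Finset.mul_sum, ← mag, mag_eq_mul_magDensity hn]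
  congr 1
  field_simp

theorem sum_gibbsWeight_const (β h : ℝ) {n : ℕ} (hn : n ≠ 0) (k : ℕ) :
    ∑ σ : Fin n → Bool with upCount σ = k, gibbsWeight β (fun _ ↦ h) n σ =
      n.choose k * exp (n * (β / 2 * magDensity n k ^ 2 + β * h * magDensity n k)) := by
  rw [← card_filter_upCount_eq, ← nsmul_eq_mul]
  refine Finset.sum_eq_card_nsmul fun σ hσ ↦ ?_
  rw [gibbsWeight_const β h hn, (Finset.mem_filter.1 hσ).2]

theorem exp_neg_mul_freeEnergy (β h : ℝ) (n k : ℕ) :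
    exp (-(n * freeEnergy β h (magDensity n k))) = exp (n * binEntropy (k / n)) *
      exp (n * (β / 2 * magDensity n k ^ 2 + β * h * magDensity n k)) := by
  rw [← exp_add, freeEnergy, one_add_magDensity_div_two]
  congr 1
  ring

theorem sum_gibbsWeight_const_le (β h : ℝ) {n k : ℕ} (hn : n ≠ 0) (hk : k ≤ n) :
    ∑ σ : Fin n → Bool with upCount σ = k, gibbsWeight β (fun _ ↦ h) n σ ≤
      exp (-(n * freeEnergy β h (magDensity n k))) := by
  rw [sum_gibbsWeight_const β h hn, exp_neg_mul_freeEnergy]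
  gcongr
  exact choose_le_exp_mul_binEntropy hn hk

theorem exp_neg_mul_freeEnergy_le (β h : ℝ) {n k : ℕ} (hn : n ≠ 0) (hk : k ≤ n) :
    exp (-(n * freeEnergy β h (magDensity n k))) ≤
      (n + 1) * ∑ σ : Fin n → Bool with upCount σ = k, gibbsWeight β (fun _ ↦ h) n σ := by
  rw [sum_gibbsWeight_const β h hn, exp_neg_mul_freeEnergy, ← mul_assoc]
  gcongr
  exact exp_mul_binEntropy_le_mul_choose hn hk

theorem exp_neg_mul_freeEnergy_le_partitionFunction (hβ : 0 ≤ β) (hm : m = tanh (β * (m + h)))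
    {n : ℕ} (hn : n ≠ 0) :
    exp (-(n * freeEnergy β h m)) ≤ partitionFunction β (fun _ ↦ h) n := by
  rw [freeEnergy_eq_G_dirac_sub_log_two hm, ← Gn_const β h hn]
  exact exp_neg_mul_Gn_le_partitionFunction hβ _ hn m

theorem partitionFunction_const_le
    (hmin : ∀ y ∈ Set.Icc (-1) 1, freeEnergy β h m ≤ freeEnergy β h y) {n : ℕ} (hn : n ≠ 0) :
    partitionFunction β (fun _ ↦ h) n ≤ (n + 1) * exp (-(n * freeEnergy β h m)) := by
  calc partitionFunction β (fun _ ↦ h) n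
      = ∑ k ∈ Finset.range (n + 1), ∑ σ : Fin n → Bool with upCount σ = k,
          gibbsWeight β (fun _ ↦ h) n σ :=
        (Finset.sum_fiberwise_of_maps_to
          (fun σ _ ↦ Finset.mem_range_succ_iff.2 (upCount_le σ)) _).symm
    _ ≤ ∑ _k ∈ Finset.range (n + 1), exp (-(n * freeEnergy β h m)) := by
        refine Finset.sum_le_sum fun k hk ↦ ?_
        have hkn := Finset.mem_range_succ_iff.1 hk
        refine (sum_gibbsWeight_const_le β h hn hkn).trans ?_
        gcongr
        exact hmin _ (magDensity_mem_Icc hkn)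
    _ = (n + 1) * exp (-(n * freeEnergy β h m)) := by simp

end ConstantField

end GibbsMeasure

section MagnetizationRate

/-- The probability that `k` of the `n` spins are `+1` equals `exp (-n * F (magDensity n k))` up to
factors polynomial in `n`. -/
structure HasMagnetizationRate (P : ∀ n, Measure (Fin n → Bool)) (F : ℝ → ℝ) : Prop where
  le_exp : ∀ {n k : ℕ}, n ≠ 0 → k ≤ n →
    P n {σ | upCount σ = k} ≤ ENNReal.ofReal (exp (-(n * F (magDensity n k))))
  exp_le : ∀ {n k : ℕ}, n ≠ 0 → k ≤ n →
    ENNReal.ofReal (exp (-(n * F (magDensity n k))) / (n + 1) ^ 2) ≤ P n {σ | upCount σ = k}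

theorem hasMagnetizationRate_gibbsMeasure_const {β h m : ℝ} (hβ : 0 ≤ β)
    (hm : m = tanh (β * (m + h)))
    (hmin : ∀ y ∈ Set.Icc (-1) 1, freeEnergy β h m ≤ freeEnergy β h y) :
    HasMagnetizationRate (gibbsMeasure β fun _ ↦ h)
      fun y ↦ freeEnergy β h y - freeEnergy β h m := by
  have hexp (n : ℕ) (y : ℝ) : exp (-(n * (freeEnergy β h y - freeEnergy β h m))) =
      exp (-(n * freeEnergy β h y)) / exp (-(n * freeEnergy β h m)) := by
    rw [← exp_sub]
    ring_nf
  have hcoe (n k : ℕ) : {σ : Fin n → Bool | upCount σ = k} =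
      ({σ | upCount σ = k} : Finset (Fin n → Bool)) := (Finset.coe_filter_univ _).symm
  constructor <;> intro n k hn hk <;> rw [hcoe, gibbsMeasure_coe_finset] <;>
    refine ENNReal.ofReal_le_ofReal ?_ <;> rw [hexp]
  · gcongr
    · exact sum_gibbsWeight_const_le β h hn hk
    · exact exp_neg_mul_freeEnergy_le_partitionFunction hβ hm hn
  · calc exp (-(n * freeEnergy β h (magDensity n k))) / exp (-(n * freeEnergy β h m)) / (n + 1) ^ 2
        ≤ (n + 1) * (∑ σ : Fin n → Bool with upCount σ = k, gibbsWeight β (fun _ ↦ h) n σ) /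
            exp (-(n * freeEnergy β h m)) / (n + 1) ^ 2 := by
          gcongr
          exact exp_neg_mul_freeEnergy_le β h hn hk
      _ = (∑ σ : Fin n → Bool with upCount σ = k, gibbsWeight β (fun _ ↦ h) n σ) /
            ((n + 1) * exp (-(n * freeEnergy β h m))) := by
          field_simp
      _ ≤ (∑ σ : Fin n → Bool with upCount σ = k, gibbsWeight β (fun _ ↦ h) n σ) /
            partitionFunction β (fun _ ↦ h) n := by
          gcongr
          · exact Finset.sum_nonneg fun σ _ ↦ (gibbsWeight_pos β _ σ).le
          · exact partitionFunction_pos β _ n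
          · exact partitionFunction_const_le hmin hn

end MagnetizationRate

section QuadraticMinimum

open scoped Asymptotics

variable {F : ℝ → ℝ} {K : Set ℝ} {m s s' : ℝ}

theorem eventually_mul_sq_le (hs : 0 < s) (hF : F ~[𝓝 m] fun y ↦ s * (y - m) ^ 2)
    (hs' : s' < s) : ∀ᶠ y in 𝓝 m, s' * (y - m) ^ 2 ≤ F y := by
  filter_upwards [hF.isLittleO.def (div_pos (sub_pos.2 hs') hs)] with y hy
  have hnorm : ‖s * (y - m) ^ 2‖ = s * (y - m) ^ 2 := norm_of_nonneg (by positivity)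
  rw [hnorm, ← mul_assoc, div_mul_cancel₀ _ hs.ne'] at hy
  have := (abs_le.1 hy).1
  rw [Pi.sub_apply] at this
  linarith

theorem exists_forall_min_mul_sq_le (hK : IsCompact K) (hcont : ContinuousOn F K)
    (hpos : ∀ y ∈ K, y ≠ m → 0 < F y) (hs : 0 < s) (hF : F ~[𝓝 m] fun y ↦ s * (y - m) ^ 2)
    (hs' : s' < s) : ∃ δ > 0, ∀ y ∈ K, min (s' * (y - m) ^ 2) δ ≤ F y := by
  obtain ⟨U, hU, hUo, hmU⟩ := eventually_nhds_iff.1 (eventually_mul_sq_le hs hF hs')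
  obtain ⟨δ, hδ, hδF⟩ : ∃ δ > 0, ∀ y ∈ K \ U, δ ≤ F y := by
    rcases (K \ U).eq_empty_or_nonempty with hempty | hne
    · exact ⟨1, one_pos, by simp [hempty]⟩
    · obtain ⟨z, hz, hzF⟩ := (hK.diff hUo).exists_isMinOn hne (hcont.mono Set.sdiff_subset)
      exact ⟨F z, hpos z hz.1 fun h ↦ hz.2 (h ▸ hmU), hzF⟩
  refine ⟨δ, hδ, fun y hy ↦ ?_⟩
  by_cases hyU : y ∈ U
  · exact min_le_of_left_le (hU y hyU)
  · exact min_le_of_right_le (hδF y ⟨hy, hyU⟩)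

theorem isCompact_setOf_mul_sq_le (hs : 0 < s) (c : ℝ) : IsCompact {x | s * x ^ 2 ≤ c} := by
  refine isCompact_Icc.of_isClosed_subset (isClosed_le (by fun_prop) continuous_const)
    fun x (hx : s * x ^ 2 ≤ c) ↦ abs_le.1 (Real.abs_le_sqrt (y := c / s) ?_)
  rwa [le_div_iff₀' hs]

end QuadraticMinimum

section PowersOfNat

theorem tendsto_natCast_rpow_of_neg {p : ℝ} (hp : p < 0) :
    Tendsto (fun n : ℕ ↦ (n : ℝ) ^ p) atTop (𝓝 0) := by
  simpa [Function.comp_def] using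
    (tendsto_rpow_neg_atTop (neg_pos.2 hp)).comp tendsto_natCast_atTop_atTop

theorem eventually_mul_rpow_le_mul {p c d : ℝ} (hp : p < 1) (hd : 0 < d) :
    ∀ᶠ n : ℕ in atTop, c * (n : ℝ) ^ p ≤ d * n := by
  have hlim : Tendsto (fun n : ℕ ↦ c * (n : ℝ) ^ (p - 1)) atTop (𝓝 0) := by
    simpa using (tendsto_natCast_rpow_of_neg (sub_neg.2 hp)).const_mul c
  filter_upwards [hlim.eventually_le_const hd, eventually_ne_atTop 0] with n hn hn₀
  have hn₀' : (n : ℝ) ≠ 0 := Nat.cast_ne_zero.2 hn₀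
  rw [rpow_sub_one hn₀', ← mul_div_assoc] at hn
  exact (div_le_iff₀ (by positivity)).1 hn

theorem eventually_log_add_one_le {γ ε : ℝ} (hγ : 0 < γ) (hε : 0 < ε) :
    ∀ᶠ n : ℕ in atTop, log (n + 1) ≤ ε * (n : ℝ) ^ γ := by
  have hlittleO : (fun x : ℝ ↦ log 2 + log x) =o[atTop] fun x ↦ x ^ γ :=
    (Asymptotics.isLittleO_const_left.2
      (Or.inr (tendsto_norm_atTop_atTop.comp (tendsto_rpow_atTop hγ)))).add
      (isLittleO_log_rpow_atTop hγ)
  filter_upwards [tendsto_natCast_atTop_atTop.eventually (hlittleO.def hε),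
    eventually_ge_atTop 1] with n hn hn₁
  have hn₁' : (1 : ℝ) ≤ n := by exact_mod_cast hn₁
  rw [norm_of_nonneg (by positivity : 0 ≤ (n : ℝ) ^ γ)] at hn
  refine le_trans ?_ ((le_abs_self _).trans hn)
  rw [← log_mul two_ne_zero (by positivity)]
  gcongr
  linarith

theorem eventually_pow_mul_exp_le {γ a b : ℝ} (hγ : 0 < γ) (hab : a < b) (j : ℕ) :
    ∀ᶠ n : ℕ in atTop,
      ((n : ℝ) + 1) ^ j * exp (-b * (n : ℝ) ^ γ) ≤ exp (-a * (n : ℝ) ^ γ) := by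
  filter_upwards [eventually_log_add_one_le hγ
    (div_pos (sub_pos.2 hab) (j.cast_add_one_pos : (0 : ℝ) < j + 1))] with n hn
  have hlog : j * log (n + 1) ≤ (b - a) * (n : ℝ) ^ γ := calc
    j * log (n + 1) ≤ (j + 1) * log (n + 1) := by
      gcongr
      · exact log_nonneg (by simp)
      · simp
    _ ≤ (j + 1) * ((b - a) / (j + 1) * (n : ℝ) ^ γ) := by gcongr
    _ = (b - a) * (n : ℝ) ^ γ := by field_simp
  rw [← exp_log n.cast_add_one_pos, ← exp_nat_mul, ← exp_add, exp_le_exp]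
  linarith

end PowersOfNat

section ModerateDeviations

open scoped Asymptotics

/-- The centred and rescaled magnetization `(S - n * m) / n ^ α` of a configuration of `n` spins,
`k` of which are `+1`. -/
def scaledMag (m α : ℝ) (n k : ℕ) : ℝ := (n : ℝ) ^ (1 - α) * (magDensity n k - m)

variable {P : ∀ n, Measure (Fin n → Bool)} {F : ℝ → ℝ} {m s α : ℝ} {C : Set ℝ} {n : ℕ}

theorem mag_sub_div_rpow (hn : n ≠ 0) (m α : ℝ) (σ : Fin n → Bool) :
    (mag σ - n * m) / (n : ℝ) ^ α = scaledMag m α n (upCount σ) := by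
  rw [scaledMag, mag_eq_mul_magDensity hn, rpow_sub (by positivity), rpow_one]
  ring

theorem mul_magDensity_sub_sq (hn : n ≠ 0) (m α : ℝ) (k : ℕ) :
    n * (magDensity n k - m) ^ 2 = scaledMag m α n k ^ 2 * (n : ℝ) ^ (2 * α - 1) := by
  have hn' : (0 : ℝ) < n := by positivity
  have hpow : ((n : ℝ) ^ (1 - α)) ^ 2 * (n : ℝ) ^ (2 * α - 1) = n := by
    rw [← rpow_mul_natCast hn'.le, ← rpow_add hn']
    convert rpow_one (n : ℝ) using 2
    push_cast
    ring
  rw [scaledMag, mul_pow, mul_right_comm, hpow]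

theorem map_scaledMag_apply (hn : n ≠ 0) (hC : MeasurableSet C) :
    (P n).map (fun σ ↦ (mag σ - n * m) / (n : ℝ) ^ α) C =
      P n {σ | scaledMag m α n (upCount σ) ∈ C} := by
  rw [funext (mag_sub_div_rpow hn m α), Measure.map_apply .of_discrete hC]
  rfl

section UpperBound

theorem HasMagnetizationRate.measure_scaledMag_mem_le (hP : HasMagnetizationRate P F)
    (hn : n ≠ 0) {L : ℝ} (hL : ∀ k ≤ n, scaledMag m α n k ∈ C → L ≤ n * F (magDensity n k)) :
    P n {σ | scaledMag m α n (upCount σ) ∈ C} ≤ ENNReal.ofReal ((n + 1) * exp (-L)) := by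
  classical
  let S := (Finset.range (n + 1)).filter fun k ↦ scaledMag m α n k ∈ C
  have hsubset : {σ | scaledMag m α n (upCount σ) ∈ C} ⊆
      ⋃ k ∈ S, {σ : Fin n → Bool | upCount σ = k} := fun σ hσ ↦
    Set.mem_biUnion (x := upCount σ)
      (Finset.mem_filter.2 ⟨Finset.mem_range_succ_iff.2 (upCount_le σ), hσ⟩) rfl
  calc P n {σ | scaledMag m α n (upCount σ) ∈ C}
      ≤ ∑ k ∈ S, P n {σ | upCount σ = k} :=
        (measure_mono hsubset).trans (measure_biUnion_finset_le _ _)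
    _ ≤ S.card • ENNReal.ofReal (exp (-L)) := by
        refine Finset.sum_le_card_nsmul _ _ _ fun k hk ↦ ?_
        have hkn := Finset.mem_range_succ_iff.1 (Finset.mem_filter.1 hk).1
        refine (hP.le_exp hn hkn).trans ?_
        gcongr
        exact hL k hkn (Finset.mem_filter.1 hk).2
    _ ≤ (n + 1) • ENNReal.ofReal (exp (-L)) := by
        gcongr
        exact (Finset.card_filter_le _ _).trans_eq (Finset.card_range _)
    _ = ENNReal.ofReal ((n + 1) * exp (-L)) := by
        rw [← ENNReal.ofReal_nsmul, nsmul_eq_mul, Nat.cast_add_one]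

theorem eventually_forall_mul_rpow_le (hα : α < 1) (hcont : ContinuousOn F (Set.Icc (-1) 1))
    (hpos : ∀ y ∈ Set.Icc (-1) 1, y ≠ m → 0 < F y) (hs : 0 < s)
    (hF : F ~[𝓝 m] fun y ↦ s * (y - m) ^ 2) {c b : ℝ} (hc : 0 < c) (hcb : c < b) :
    ∀ᶠ n : ℕ in atTop, ∀ k ≤ n, b ≤ s * scaledMag m α n k ^ 2 →
      c * (n : ℝ) ^ (2 * α - 1) ≤ n * F (magDensity n k) := by
  have hb := hc.trans hcb
  have hs' : s * (c / b) < s := mul_lt_of_lt_one_right hs ((div_lt_one hb).2 hcb)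
  obtain ⟨δ, hδ, hδF⟩ := exists_forall_min_mul_sq_le isCompact_Icc hcont hpos hs hF hs'
  filter_upwards [eventually_mul_rpow_le_mul (c := c) (by linarith : 2 * α - 1 < 1) hδ,
    eventually_ne_atTop 0] with n hnδ hn k hk hbk
  refine le_trans ?_ (mul_le_mul_of_nonneg_left (hδF _ (magDensity_mem_Icc hk)) n.cast_nonneg)
  rw [mul_min_of_nonneg _ _ n.cast_nonneg, le_min_iff, mul_comm _ δ]
  refine ⟨?_, hnδ⟩
  calc c * (n : ℝ) ^ (2 * α - 1)
      = c / b * b * (n : ℝ) ^ (2 * α - 1) := by rw [div_mul_cancel₀ _ hb.ne']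
    _ ≤ c / b * (s * scaledMag m α n k ^ 2) * (n : ℝ) ^ (2 * α - 1) := by gcongr
    _ = s * (c / b) * (scaledMag m α n k ^ 2 * (n : ℝ) ^ (2 * α - 1)) := by ring
    _ = n * (s * (c / b) * (magDensity n k - m) ^ 2) := by
        rw [← mul_magDensity_sub_sq hn]
        ring

theorem HasMagnetizationRate.eventually_map_le [∀ n, IsProbabilityMeasure (P n)]
    (hP : HasMagnetizationRate P F) (hα : α ∈ Set.Ioo (1 / 2) 1)
    (hcont : ContinuousOn F (Set.Icc (-1) 1)) (hpos : ∀ y ∈ Set.Icc (-1) 1, y ≠ m → 0 < F y)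
    (hs : 0 < s) (hF : F ~[𝓝 m] fun y ↦ s * (y - m) ^ 2) (hC : MeasurableSet C)
    {b' b : ℝ} (hb : b' < b) (hCb : ∀ x ∈ C, b ≤ s * x ^ 2) :
    ∀ᶠ n : ℕ in atTop, (P n).map (fun σ ↦ (mag σ - n * m) / (n : ℝ) ^ α) C ≤
      ENNReal.ofReal (exp (-b' * (n : ℝ) ^ (2 * α - 1))) := by
  rcases lt_or_ge b' 0 with hneg | hnonneg
  · filter_upwards [eventually_ne_atTop 0] with n hn
    rw [map_scaledMag_apply hn hC]
    refine prob_le_one.trans (ENNReal.one_le_ofReal.2 (one_le_exp ?_))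
    exact mul_nonneg (neg_nonneg.2 hneg.le) (by positivity)
  · obtain ⟨c, hb'c, hcb⟩ := exists_between hb
    filter_upwards [eventually_ne_atTop 0,
      eventually_forall_mul_rpow_le hα.2 hcont hpos hs hF (hnonneg.trans_lt hb'c) hcb,
      eventually_pow_mul_exp_le (by linarith [hα.1] : 0 < 2 * α - 1) hb'c 1] with n hn hL hexp
    rw [map_scaledMag_apply hn hC]
    refine (hP.measure_scaledMag_mem_le hn fun k hk hkC ↦ hL k hk (hCb _ hkC)).trans ?_
    rw [pow_one, neg_mul c] at hexp
    exact ENNReal.ofReal_le_ofReal hexp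

end UpperBound

section LowerBound

theorem exists_abs_magDensity_sub_le (hn : n ≠ 0) {y : ℝ} (hy : y ∈ Set.Icc (-1) 1) :
    ∃ k ≤ n, |magDensity n k - y| ≤ 2 / n := by
  have hn' : (0 : ℝ) < n := by positivity
  obtain ⟨hp₀, hp₁⟩ := one_add_div_two_mem_Icc hy
  refine ⟨⌊n * ((1 + y) / 2)⌋₊, Nat.floor_le_of_le (mul_le_of_le_one_right hn'.le hp₁), ?_⟩
  have hsub : magDensity n ⌊n * ((1 + y) / 2)⌋₊ - y =
      2 / n * (⌊n * ((1 + y) / 2)⌋₊ - n * ((1 + y) / 2)) := by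
    rw [magDensity]
    field_simp
    ring
  rw [hsub, abs_mul, abs_of_pos (by positivity)]
  refine mul_le_of_le_one_right (by positivity) (abs_sub_le_iff.2 ⟨?_, ?_⟩)
  · linarith [Nat.floor_le (by positivity : 0 ≤ n * ((1 + y) / 2))]
  · linarith [Nat.lt_floor_add_one (n * ((1 + y) / 2))]

theorem exists_tendsto_scaledMag (hα : α ∈ Set.Ioo 0 1) (hm : m ∈ Set.Ioo (-1) 1) (x : ℝ) :
    ∃ k : ℕ → ℕ, (∀ᶠ n in atTop, k n ≤ n) ∧
      Tendsto (fun n ↦ scaledMag m α n (k n)) atTop (𝓝 x) := by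
  let y (n : ℕ) : ℝ := m + x * (n : ℝ) ^ (α - 1)
  have hy : Tendsto y atTop (𝓝 m) := by
    simpa using ((tendsto_natCast_rpow_of_neg (sub_neg.2 hα.2)).const_mul x).const_add m
  have hexists : ∀ᶠ n in atTop, ∃ k ≤ n, |magDensity n k - y n| ≤ 2 / n := by
    filter_upwards [eventually_ne_atTop 0, hy.eventually_mem (Icc_mem_nhds hm.1 hm.2)] with n hn hyn
    exact exists_abs_magDensity_sub_le hn hyn
  obtain ⟨k, hk⟩ := skolem.1 hexists
  refine ⟨k, hk.mono fun n hn ↦ hn.1, tendsto_sub_nhds_zero_iff.1 ?_⟩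
  have hbound : Tendsto (fun n : ℕ ↦ 2 * (n : ℝ) ^ (-α)) atTop (𝓝 0) := by
    simpa using (tendsto_natCast_rpow_of_neg (neg_neg_of_pos hα.1)).const_mul 2
  refine squeeze_zero_norm' ?_ hbound
  filter_upwards [hk, eventually_gt_atTop 0] with n hkn hn
  have hn' : (0 : ℝ) < n := Nat.cast_pos.2 hn
  have hx : x = (n : ℝ) ^ (1 - α) * (x * (n : ℝ) ^ (α - 1)) := by
    rw [mul_left_comm, ← rpow_add hn']
    simp
  calc ‖scaledMag m α n (k n) - x‖
      = (n : ℝ) ^ (1 - α) * |magDensity n (k n) - y n| := by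
        nth_rw 1 [hx]
        rw [scaledMag, ← mul_sub, sub_sub, norm_mul, norm_of_nonneg (by positivity), norm_eq_abs]
    _ ≤ (n : ℝ) ^ (1 - α) * (2 / n) := by
        gcongr
        exact hkn.2
    _ = 2 * (n : ℝ) ^ (-α) := by
        rw [sub_eq_neg_add, rpow_add_one hn'.ne']
        field_simp

theorem tendsto_magDensity (hα : α < 1) {x : ℝ} {k : ℕ → ℕ}
    (hk : Tendsto (fun n ↦ scaledMag m α n (k n)) atTop (𝓝 x)) :
    Tendsto (fun n ↦ magDensity n (k n)) atTop (𝓝 m) := by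
  have hlim := (hk.mul (tendsto_natCast_rpow_of_neg (sub_neg.2 hα))).const_add m
  rw [mul_zero, add_zero] at hlim
  refine hlim.congr' ?_
  filter_upwards [eventually_gt_atTop 0] with n hn
  rw [scaledMag, mul_right_comm, ← rpow_add (Nat.cast_pos.2 hn)]
  simp

theorem tendsto_mul_div_rpow (hα : α < 1) (hF : F ~[𝓝 m] fun y ↦ s * (y - m) ^ 2) {x : ℝ}
    {k : ℕ → ℕ} (hk : Tendsto (fun n ↦ scaledMag m α n (k n)) atTop (𝓝 x)) :
    Tendsto (fun n ↦ n * F (magDensity n (k n)) / (n : ℝ) ^ (2 * α - 1)) atTop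
      (𝓝 (s * x ^ 2)) := by
  have hequiv := (Asymptotics.IsEquivalent.refl (u := fun n : ℕ ↦ (n : ℝ))).mul
    (hF.comp_tendsto (tendsto_magDensity hα hk))
  have hequiv' := hequiv.div
    (Asymptotics.IsEquivalent.refl (u := fun n : ℕ ↦ (n : ℝ) ^ (2 * α - 1)))
  refine hequiv'.symm.tendsto_nhds (((hk.pow 2).const_mul s).congr' ?_)
  filter_upwards [eventually_gt_atTop 0] with n hn
  have hpow : (n : ℝ) ^ (2 * α - 1) ≠ 0 := (rpow_pos_of_pos (Nat.cast_pos.2 hn) _).ne'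
  simp only [Pi.div_apply, Pi.mul_apply, Function.comp_apply]
  rw [mul_left_comm, mul_magDensity_sub_sq hn.ne' m α, ← mul_assoc, mul_div_cancel_right₀ _ hpow]

theorem HasMagnetizationRate.eventually_le_map (hP : HasMagnetizationRate P F)
    (hα : α ∈ Set.Ioo (1 / 2) 1) (hm : m ∈ Set.Ioo (-1) 1)
    (hF : F ~[𝓝 m] fun y ↦ s * (y - m) ^ 2) (hC : MeasurableSet C)
    {x A : ℝ} (hx : x ∈ interior C) (hA : s * x ^ 2 < A) :
    ∀ᶠ n : ℕ in atTop, ENNReal.ofReal (exp (-A * (n : ℝ) ^ (2 * α - 1))) ≤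
      (P n).map (fun σ ↦ (mag σ - n * m) / (n : ℝ) ^ α) C := by
  obtain ⟨k, hkn, hk⟩ := exists_tendsto_scaledMag ⟨one_half_pos.trans hα.1, hα.2⟩ hm x
  obtain ⟨c, hxc, hcA⟩ := exists_between hA
  filter_upwards [eventually_ne_atTop 0, hkn, hk.eventually_mem (mem_interior_iff_mem_nhds.1 hx),
    (tendsto_mul_div_rpow hα.2 hF hk).eventually_le_const hxc,
    eventually_pow_mul_exp_le (by linarith [hα.1] : 0 < 2 * α - 1) hcA 2]
    with n hn hkn hkC hrate hexp
  have hrate' : n * F (magDensity n (k n)) ≤ c * (n : ℝ) ^ (2 * α - 1) :=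
    (div_le_iff₀ (by positivity)).1 hrate
  rw [map_scaledMag_apply hn hC]
  calc ENNReal.ofReal (exp (-A * (n : ℝ) ^ (2 * α - 1)))
      ≤ ENNReal.ofReal (exp (-(n * F (magDensity n (k n)))) / (n + 1) ^ 2) := by
        refine ENNReal.ofReal_le_ofReal ((le_div_iff₀' (by positivity)).2 (hexp.trans ?_))
        rw [neg_mul]
        gcongr
    _ ≤ P n {σ | upCount σ = k n} := hP.exp_le hn hkn
    _ ≤ P n {σ | scaledMag m α n (upCount σ) ∈ C} :=
        measure_mono fun σ (hσ : upCount σ = k n) ↦ by rwa [Set.mem_ofPred_eq, hσ]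

end LowerBound

theorem HasMagnetizationRate.hasLDP_map [∀ n, IsProbabilityMeasure (P n)]
    (hP : HasMagnetizationRate P F) (hα : α ∈ Set.Ioo (1 / 2) 1) (hm : m ∈ Set.Ioo (-1) 1)
    (hcont : ContinuousOn F (Set.Icc (-1) 1)) (hpos : ∀ y ∈ Set.Icc (-1) 1, y ≠ m → 0 < F y)
    (hs : 0 < s) (hF : F ~[𝓝 m] fun y ↦ s * (y - m) ^ 2) :
    HasLDP (fun n ↦ (P n).map fun σ ↦ (mag σ - n * m) / (n : ℝ) ^ α)
      (fun n ↦ (n : ℝ) ^ (2 * α - 1)) (fun x ↦ ENNReal.ofReal (s * x ^ 2)) := by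
  have hspeed : ∀ᶠ n : ℕ in atTop, 0 < (n : ℝ) ^ (2 * α - 1) := by
    filter_upwards [eventually_gt_atTop 0] with n hn
    positivity
  exact hasLDP_ofReal hspeed (fun x ↦ by positivity) (by fun_prop)
    (isCompact_setOf_mul_sq_le hs)
    (fun C hC x hx A hA ↦ hP.eventually_le_map hα hm hF hC hx hA)
    (fun C hC b' b hb hCb ↦ hP.eventually_map_le hα hcont hpos hs hF hC hb hCb)

end ModerateDeviations

section ConstantFieldDeviations

open scoped Asymptotics

variable {β h m : ℝ}

theorem one_div_one_sub_sq_sub_pos (hm : m ∈ Set.Ioo (-1) 1) (hstable : β * (1 - m ^ 2) < 1) :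
    0 < 1 / (1 - m ^ 2) - β := by
  have hsq : 0 < 1 - m ^ 2 := by nlinarith [hm.1, hm.2]
  rwa [sub_pos, lt_div_iff₀ hsq]

theorem isEquivalent_freeEnergy_sub (hm : m = tanh (β * (m + h)))
    (hstable : β * (1 - m ^ 2) < 1) :
    (fun y ↦ freeEnergy β h y - freeEnergy β h m) ~[𝓝 m]
      fun y ↦ (1 / (1 - m ^ 2) - β) / 2 * (y - m) ^ 2 := by
  have hmem : m ∈ Set.Ioo (-1) 1 := hm ▸ tanh_mem_Ioo _
  have hpos := one_div_one_sub_sq_sub_pos hmem hstable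
  exact (Asymptotics.isLittleO_const_mul_right_iff (half_pos hpos).ne').2
    (isLittleO_freeEnergy_sub hm)

theorem hasLDP_gibbsMeasure_const {α : ℝ} (hβ : 0 ≤ β) (hm : m = tanh (β * (m + h)))
    (hmin : ∀ x ≠ m, G β (Measure.dirac h) m < G β (Measure.dirac h) x)
    (hstable : β * (1 - m ^ 2) < 1) (hα : α ∈ Set.Ioo (1 / 2) 1) :
    HasLDP (fun n ↦ (gibbsMeasure β (fun _ ↦ h) n).map fun σ ↦ (mag σ - n * m) / (n : ℝ) ^ α)
      (fun n ↦ (n : ℝ) ^ (2 * α - 1))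
      (fun x ↦ ENNReal.ofReal (x ^ 2 / (2 * ((1 - m ^ 2) / (1 - β * (1 - m ^ 2)))))) := by
  have hmem : m ∈ Set.Ioo (-1) 1 := hm ▸ tanh_mem_Ioo _
  have hpos := one_div_one_sub_sq_sub_pos hmem hstable
  have hlt := freeEnergy_lt hm hmin
  have hP := hasMagnetizationRate_gibbsMeasure_const hβ hm fun y hy ↦
    (eq_or_ne y m).elim (fun h ↦ h ▸ le_rfl) fun hne ↦ (hlt y hy hne).le
  have hrate (x : ℝ) : x ^ 2 / (2 * ((1 - m ^ 2) / (1 - β * (1 - m ^ 2)))) =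
      (1 / (1 - m ^ 2) - β) / 2 * x ^ 2 := by
    have hsq : 1 - m ^ 2 ≠ 0 := by nlinarith [hmem.1, hmem.2]
    field_simp
  simp_rw [hrate]
  exact hP.hasLDP_map hα hmem ((continuous_freeEnergy β h).sub continuous_const).continuousOn
    (fun y hy hne ↦ sub_pos.2 (hlt y hy hne)) (half_pos hpos)
    (isEquivalent_freeEnergy_sub hm hstable)

end ConstantFieldDeviations

/-- MDP for the classical Curie-Weiss model with external field
(Example 4.1 of the paper). -/
theorem curie_weiss_external_field
    (β : ℝ) (hβ : 0 < β) (hf : ℝ) (hhf : hf ≠ 0)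
    (m : ℝ) (hm : m = Real.tanh (β * (m + hf))) (hsgn : Real.sign m = Real.sign hf)
    (huniq : ∀ x : ℝ, x = Real.tanh (β * (x + hf)) →
      Real.sign x = Real.sign hf → x = m) :
    (∀ x : ℝ, x ≠ m →
        G β (Measure.dirac hf) m < G β (Measure.dirac hf) x) ∧
      IsMinOfType β (Measure.dirac hf) m 1 (β - β ^ 2 * (1 - m ^ 2)) ∧
      ∀ α : ℝ, 1 / 2 < α → α < 1 →
        HasLDP
          (fun n => (gibbsMeasure β (fun _ => hf) n).map
            (fun σ => (mag σ - n * m) / (n : ℝ) ^ α))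
          (fun n => (n : ℝ) ^ (2 * α - 1))
          (fun x => ENNReal.ofReal
            (x ^ 2 / (2 * ((1 - m ^ 2) / (1 - β * (1 - m ^ 2)))))) := by
  have hmin : ∀ x ≠ m, G β (Measure.dirac hf) m < G β (Measure.dirac hf) x := fun _ ↦
    G_dirac_lt hβ hhf hm hsgn
  have hstable : β * (1 - m ^ 2) < 1 := mul_one_sub_sq_lt_one hβ hhf hm hsgn
  exact ⟨hmin, isMinOfType_one_G_dirac hβ hm hstable, fun α hα₀ hα₁ ↦
    hasLDP_gibbsMeasure_const hβ.le hm hmin hstable ⟨hα₀, hα₁⟩⟩
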